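/- Define Ã(s) = −ζ'(s)/ζ(s) − 1/(s−1) for real s. Then Ã(s) < 0 for all real s with −2 < s < 1, and for every real x > 1, −∫_{−1}^{1} Ã(s)·(1−s)·x^s ds ≤ γ·x/(log x)^2 + ((c−γ)/2)·x/(log x)^3 − (c+γ)/(x·log x) − c/(x·(log x)^2) − (c−γ)/(2x·(log x)^3), where c = ζ'(−1)/ζ(−1) − 2·(d/ds)(ζ'(s)/ζ(s))|_{s=−1} and γ is the Euler–Mascheroni constant. -/

import Mathlib

open Real
open scoped ComplexOrder

/-- `Ã(s) = −ζ'(s)/ζ(s) − 1/(s−1)` for real `s`. -/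
noncomputable def Atil (s : ℝ) : ℂ :=
  -(deriv riemannZeta (s : ℂ) / riemannZeta (s : ℂ)) - 1 / ((s : ℂ) - 1)

/-- `c = ζ'(−1)/ζ(−1) − 2·(ζ'/ζ)'(−1)`. -/
noncomputable def cConst : ℂ :=
  deriv riemannZeta (-1) / riemannZeta (-1)
    - 2 * deriv (fun s : ℂ => deriv riemannZeta s / riemannZeta s) (-1)

open Set Filter Topology MeasureTheory Asymptotics

noncomputable def kern (x : ℝ) : ℝ := (Ioi (1:ℝ)).indicator (fun x => (Int.fract x)^2 * (1 - Int.fract x)^2) x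

lemma kern_nonneg (x : ℝ) : 0 ≤ kern x := by
  unfold kern
  apply Set.indicator_nonneg
  intro x _
  positivity

lemma kern_le (x : ℝ) : kern x ≤ 1/16 := by
  unfold kern
  apply Set.indicator_le' (f := fun x => (Int.fract x)^2 * (1 - Int.fract x)^2) (g := fun _ => (1/16:ℝ))
  · intro x _
    have h0 := Int.fract_nonneg x
    have h1 := (Int.fract_lt_one x).le
    set y := Int.fract x
    have h2 : y * (1-y) ≤ 1/4 := by nlinarith [sq_nonneg (y-1/2)]
    have h3 : 0 ≤ y * (1-y) := mul_nonneg h0 (by linarith)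
    nlinarith
  · intro x _
    norm_num

lemma kern_meas : Measurable kern := by
  unfold kern
  apply Measurable.indicator _ measurableSet_Ioi
  have := measurable_fract (R := ℝ)
  fun_prop

noncomputable def kf (j : ℕ) (t : ℝ) : ℂ := (((log t)^j * kern t : ℝ) : ℂ)

lemma kf_succ (j : ℕ) : (fun t => log t • kf j t) = kf (j+1) := by
  ext t
  simp only [kf, Complex.real_smul]
  push_cast
  ring

lemma kf_top (j : ℕ) : ∀ e : ℝ, 0 < e → kf j =O[atTop] (fun x : ℝ => x ^ (-(-e))) := by
  induction j with
  | zero =>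
    intro e he
    apply IsBigO.of_bound 1
    filter_upwards [eventually_ge_atTop 1] with x hx
    simp only [kf, pow_zero, one_mul, neg_neg, Complex.norm_real, norm_eq_abs]
    rw [abs_of_nonneg (kern_nonneg x), abs_of_nonneg (by positivity)]
    have := one_le_rpow hx he.le
    have := kern_le x
    linarith
  | succ j ih =>
    intro e he
    rw [← kf_succ]
    exact isBigO_rpow_top_log_smul (by linarith : -e < -(e/2)) (ih (e/2) (by linarith))

lemma kf_bot (j : ℕ) (b : ℝ) : kf j =O[𝓝[>] 0] (fun x : ℝ => x ^ (-b)) := by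
  apply IsBigO.of_bound 1
  have : ∀ᶠ x : ℝ in 𝓝[>] 0, x < 1 := mem_nhdsWithin_of_mem_nhds (Iio_mem_nhds (by norm_num))
  filter_upwards [this] with x hx
  have : kern x = 0 := by
    unfold kern
    rw [indicator_of_notMem]
    simp [hx.le]
  simp [kf, this]

lemma kf_loc (j : ℕ) : LocallyIntegrableOn (kf j) (Ioi 0) := by
  have h1 : LocallyIntegrableOn (fun t => ((kern t : ℝ):ℂ)) (Ioi (0:ℝ)) := by
    have : LocallyIntegrable (fun t => ((kern t : ℝ):ℂ)) := by
      apply (locallyIntegrable_const (1/16:ℝ)).mono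
      · exact (Complex.measurable_ofReal.comp kern_meas).aestronglyMeasurable
      · refine Eventually.of_forall fun x => ?_
        simp only [Complex.norm_real, norm_eq_abs]
        rw [abs_of_nonneg (kern_nonneg x)]
        have := kern_le x
        norm_num at this ⊢
        linarith
    exact this.locallyIntegrableOn _
  have h2 : ContinuousOn (fun t : ℝ => (((log t)^j : ℝ):ℂ)) (Ioi (0:ℝ)) := by
    apply Complex.continuous_ofReal.comp_continuousOn
    apply ContinuousOn.pow
    exact continuousOn_log.mono (fun x hx => (ne_of_gt hx))
  have := h1.continuousOn_mul h2 isOpen_Ioi.isLocallyClosed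
  convert this using 2 with t
  simp [kf]

noncomputable def Mj (j : ℕ) (s : ℂ) : ℂ := mellin (kf j) (-s-3)

lemma Mj_conv (j : ℕ) (s : ℂ) (hs : -3 < s.re) : MellinConvergent (kf j) (-s-3) := by
  apply mellinConvergent_of_isBigO_rpow (kf_loc j) (kf_top j ((s.re+3)/2) (by linarith)) _
    (kf_bot j (-s.re-4)) _
  · simp; linarith
  · simp; linarith

lemma Mj_hasDerivAt (j : ℕ) (s : ℂ) (hs : -3 < s.re) :
    HasDerivAt (Mj j) (-(Mj (j+1) s)) s := by
  have := (mellin_hasDerivAt_of_isBigO_rpow (s := -s-3) (kf_loc j) (kf_top j ((s.re+3)/2) (by linarith)) (by simp; linarith)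
    (kf_bot j (-s.re-4)) (by simp; linarith)).2
  rw [kf_succ] at this
  have h2 : HasDerivAt (fun s : ℂ => -s-3) (-1) s := by
    simpa using (hasDerivAt_id s).neg.sub_const 3
  have := this.comp s h2
  rw [mul_neg_one] at this
  exact this

noncomputable def Jr (j : ℕ) (s : ℝ) : ℝ := ∫ x in Ioi (1:ℝ), (log x)^j * kern x * x^(-s-4)

lemma Jr_aux (j : ℕ) (s : ℝ) : EqOn (fun t : ℝ => (t:ℂ)^(-(s:ℂ)-3-1) • kf j t) 
   (fun x : ℝ => (((log x)^j * kern x * x^(-s-4) : ℝ) : ℂ)) (Ioi 0) := by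
  intro x hx
  have hx' : (0:ℝ) < x := hx
  simp only [kf, smul_eq_mul]
  rw [show (-(s:ℂ)-3-1) = ((-s-4:ℝ):ℂ) by push_cast; ring, ← Complex.ofReal_cpow hx'.le]
  push_cast; ring

lemma Mj_eq (j : ℕ) (s : ℝ) : Mj j s = (Jr j s : ℂ) := by
  unfold Mj mellin Jr
  rw [setIntegral_congr_fun measurableSet_Ioi (Jr_aux j s), integral_complex_ofReal]
  congr 1
  apply setIntegral_eq_of_subset_of_forall_sdiff_eq_zero measurableSet_Ioi
  · exact Ioi_subset_Ioi (by norm_num)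
  · intro x hx
    have : kern x = 0 := by
      unfold kern
      rw [indicator_of_notMem hx.2]
    simp [this]

lemma Jr_int (j : ℕ) (s : ℝ) (hs : -3 < s) : IntegrableOn (fun x => (log x)^j * kern x * x^(-s-4)) (Ioi 1) := by
  have := Mj_conv j s (by simpa using hs)
  unfold MellinConvergent at this
  rw [integrableOn_congr_fun (Jr_aux j s) measurableSet_Ioi] at this
  have h2 : IntegrableOn (fun x => (log x)^j * kern x * x^(-s-4)) (Ioi 0) := by
    have h3 := this.re
    simp only [RCLike.re_to_complex, Complex.ofReal_re] at h3
    exact h3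
  exact h2.mono_set (Ioi_subset_Ioi (by norm_num))

lemma Jr_nonneg (j : ℕ) (s : ℝ) : 0 ≤ Jr j s := by
  apply setIntegral_nonneg measurableSet_Ioi
  intro x hx
  have hx' : (1:ℝ) < x := hx
  have := log_nonneg hx'.le
  have := kern_nonneg x
  positivity

lemma J0_le (s : ℝ) (hs : -3 < s) : Jr 0 s ≤ 1/(16*(s+3)) := by
  have h1 : IntegrableOn (fun x : ℝ => (1/16) * x^(-s-4)) (Ioi 1) :=
    (integrableOn_Ioi_rpow_of_lt (by linarith) (by norm_num)).const_mul _
  have : Jr 0 s ≤ ∫ x in Ioi (1:ℝ), (1/16) * x^(-s-4) := by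
    apply setIntegral_mono_on (Jr_int 0 s hs) h1 measurableSet_Ioi
    intro x hx
    have hx' : (1:ℝ) < x := hx
    simp only [pow_zero, one_mul]
    gcongr
    exact kern_le x
  rw [integral_const_mul, integral_Ioi_rpow_of_lt (by linarith) (by norm_num)] at this
  apply this.trans_eq
  rw [one_rpow]
  have h1 : s + 3 ≠ 0 := by linarith
  have h2 : -s-4+1 ≠ 0 := by intro h; apply h1; linarith
  field_simp
  ring

lemma J1_le (s : ℝ) (hs : -3 < s) : Jr 1 s ≤ 1/(8*(s+3)^2) := by
  have hz : 0 < s + 3 := by linarith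
  have i1 : IntegrableOn (fun x : ℝ => x^(-(s+3)/2-1)) (Ioi 1) :=
    integrableOn_Ioi_rpow_of_lt (by linarith) (by norm_num)
  have i2 : IntegrableOn (fun x : ℝ => x^(-s-4)) (Ioi 1) :=
    integrableOn_Ioi_rpow_of_lt (by linarith) (by norm_num)
  have : Jr 1 s ≤ ∫ x in Ioi (1:ℝ), (1/(8*(s+3))) * (x^(-(s+3)/2-1) - x^(-s-4)) := by
    apply setIntegral_mono_on (Jr_int 1 s hs) ((i1.sub i2).const_mul _) measurableSet_Ioi
    intro x hx
    have hx' : (1:ℝ) < x := hx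
    have hx0 : (0:ℝ) < x := by linarith
    have hl : log x * ((s+3)/2) ≤ x^((s+3)/2) - 1 := by
      rw [rpow_def_of_pos hx0]
      linarith [add_one_le_exp (log x * ((s+3)/2))]
    have hl2 : 0 ≤ log x := log_nonneg hx'.le
    have e1 : x^(-(s+3)/2-1) = x^((s+3)/2) * x^(-s-4) := by
      rw [← rpow_add hx0]; congr 1; ring
    have hp : 0 ≤ x^(-s-4) := by positivity
    simp only [pow_one, Pi.sub_apply]
    rw [e1]
    have : log x * kern x ≤ 1/(8*(s+3)) * (x^((s+3)/2) - 1) := by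
      calc log x * kern x ≤ log x * (1/16) := by gcongr; exact kern_le x
        _ = 1/(8*(s+3)) * (log x * ((s+3)/2)) := by field_simp; ring
        _ ≤ _ := by gcongr
    calc _ ≤ 1/(8*(s+3)) * (x^((s+3)/2) - 1) * x^(-s-4) := by gcongr
      _ = _ := by ring
  rw [integral_const_mul, integral_sub i1 i2, integral_Ioi_rpow_of_lt (by linarith) (by norm_num), integral_Ioi_rpow_of_lt (by linarith) (by norm_num)] at this
  apply this.trans_eq
  rw [one_rpow, one_rpow]
  rw [show -(s+3)/2 - 1 + 1 = -((s+3)/2) by ring, show -s-4+1 = -(s+3) by ring]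
  field_simp
  ring

lemma hr_aux (p q x : ℝ) (hx : 0 < x) (h : q = p - 1) : HasDerivAt (fun x : ℝ => x^p) (p * x^q) x := by
  rw [h]; exact hasDerivAt_rpow_const (Or.inl hx.ne')

lemma em_step (s : ℝ) (hs : 1 < s) (a : ℝ) (ha : 0 < a) :
    s*(s+1)*(s+2)*(s+3) * ∫ x in a..(a+1), ((x-a)^2 * (1-(x-a))^2) * x^(-s-4)
     = 2 * (-s * (a+1)^(-s-1) - -s * a^(-s-1)) - 12 * (a^(-s) + (a+1)^(-s))
       + 24 * ((a+1)^(1-s) - a^(1-s))/(1-s) := by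
  have h1s : 1 - s ≠ 0 := by linarith
  rw [← intervalIntegral.integral_const_mul]
  have key : ∀ x ∈ uIcc a (a+1), HasDerivAt (fun x : ℝ =>
      (x-a)^2 * (1-(x-a))^2 * (-(s*(s+1)*(s+2)) * x^(-s-3))
      - (2*(x-a) - 6*(x-a)^2 + 4*(x-a)^3) * (s*(s+1) * x^(-s-2))
      + (2 - 12*(x-a) + 12*(x-a)^2) * (-s * x^(-s-1))
      - (-12 + 24*(x-a)) * x^(-s) + 24/(1-s) * x^(1-s))
      (s*(s+1)*(s+2)*(s+3) * (((x-a)^2 * (1-(x-a))^2) * x^(-s-4))) x := by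
    intro x hx
    rw [uIcc_of_le (by linarith)] at hx
    have hx0 : 0 < x := lt_of_lt_of_le ha hx.1
    have y1 : HasDerivAt (fun x : ℝ => x - a) 1 x := (hasDerivAt_id x).sub_const a
    have p3 := hr_aux (-s-3) (-s-4) x hx0 (by ring)
    have p2 := hr_aux (-s-2) (-s-3) x hx0 (by ring)
    have p1 := hr_aux (-s-1) (-s-2) x hx0 (by ring)
    have p0 := hr_aux (-s) (-s-1) x hx0 (by ring)
    have pm := hr_aux (1-s) (-s) x hx0 (by ring)
    have k0 := (y1.pow 2).mul ((y1.const_sub 1).pow 2)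
    have k1 := ((y1.const_mul 2).sub ((y1.pow 2).const_mul 6)).add ((y1.pow 3).const_mul 4)
    have k2 := ((y1.const_mul 12).const_sub 2).add ((y1.pow 2).const_mul 12)
    have k3 := (y1.const_mul 24).const_add (-12)
    have := ((((k0.mul (p3.const_mul (-(s*(s+1)*(s+2))))).sub (k1.mul (p2.const_mul (s*(s+1))))).add
      (k2.mul (p1.const_mul (-s)))).sub (k3.mul p0)).add (pm.const_mul (24/(1-s)))
    convert! this using 1
    simp only [Pi.pow_apply, Pi.mul_apply, Pi.sub_apply, Pi.add_apply]
    field_simp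
    push_cast
    ring
  rw [intervalIntegral.integral_eq_sub_of_hasDerivAt key]
  · simp only [sub_self, add_sub_cancel_left]
    ring
  · apply ContinuousOn.intervalIntegrable
    rw [uIcc_of_le (by linarith)]
    apply ContinuousOn.mul (by fun_prop)
    apply ContinuousOn.mul (by fun_prop)
    apply ContinuousOn.rpow_const (by fun_prop)
    intro x hx
    left
    linarith [hx.1]

lemma kern_eq (n : ℕ) (x : ℝ) (h1 : (n:ℝ)+1 ≤ x) (h2 : x ≤ (n:ℝ)+1+1) :
    kern x = (x-(n+1))^2 * (1-(x-(n+1)))^2 := by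
  have hn : (0:ℝ) ≤ n := n.cast_nonneg
  unfold kern
  rcases eq_or_lt_of_le h2 with h | h
  · rw [indicator_of_mem (by simp [h]; linarith)]
    have : Int.fract x = 0 := by
      rw [h]; 
      have := Int.fract_natCast (R := ℝ) (n+2)
      push_cast at this
      rw [← this]; congr 1; ring
    rw [this, h]; ring
  · have hf : Int.fract x = x - (n+1) := by
      rw [Int.fract_eq_iff]
      refine ⟨by linarith, by linarith, (n+1:ℕ), ?_⟩
      push_cast; ring
    rcases eq_or_lt_of_le (show (1:ℝ) ≤ x by linarith) with h3 | h3
    · rw [indicator_of_notMem (by simp [← h3])]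
      have : (n:ℝ) = 0 := by linarith
      rw [this, ← h3]; ring
    · rw [indicator_of_mem (show x ∈ Ioi (1:ℝ) from h3), hf]

lemma em_sum (s : ℝ) (hs : 1 < s) (N : ℕ) :
    s*(s+1)*(s+2)*(s+3) * ∫ x in (1:ℝ)..(N+1), (log x)^0 * kern x * x^(-s-4)
     = 2 * (-s * ((N:ℝ)+1)^(-s-1) + s) - 24 * ∑ i ∈ Finset.range N, ((i:ℝ)+1)^(-s)
       + 12 * (1 - ((N:ℝ)+1)^(-s)) + 24 * (((N:ℝ)+1)^(1-s) - 1)/(1-s) := by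
  have hI := Jr_int 0 s (by linarith)
  induction N with
  | zero => simp
  | succ N ih =>
    have hn : (0:ℝ) ≤ N := N.cast_nonneg
    have hi : ∀ a b : ℝ, 1 ≤ a → a ≤ b → IntervalIntegrable (fun x => (log x)^0 * kern x * x^(-s-4)) volume a b := by
      intro a b h1 h2
      rw [intervalIntegrable_iff_integrableOn_Ioc_of_le h2]
      exact hI.mono_set (fun x hx => lt_of_le_of_lt h1 hx.1)
    rw [← intervalIntegral.integral_add_adjacent_intervals (b := (N:ℝ)+1) (hi _ _ le_rfl (by linarith)) (hi _ _ (by linarith) (by push_cast; linarith)), mul_add, ih]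
    have : ∫ x in ((N:ℝ)+1)..((N+1:ℕ):ℝ)+1, (log x)^0 * kern x * x^(-s-4) =
       ∫ x in ((N:ℝ)+1)..((N:ℝ)+1)+1, ((x-(N+1))^2 * (1-(x-(N+1)))^2) * x^(-s-4) := by
      push_cast
      apply intervalIntegral.integral_congr
      intro x hx
      rw [uIcc_of_le (by linarith)] at hx
      simp only [pow_zero, one_mul]
      rw [kern_eq N x hx.1 hx.2]
    rw [this, em_step s hs _ (by linarith), Finset.sum_range_succ]
    push_cast
    ring

lemma em_zeta (s : ℝ) (hs : 1 < s) :
    ((s:ℂ)-1) * riemannZeta s = ((s:ℂ)+2)*(s+3)/12 - (s-1)*s*(s+1)*(s+2)*(s+3)/24 * Mj 0 s := by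
  have hI := Jr_int 0 s (by linarith)
  have hN : Tendsto (fun N : ℕ => (N:ℝ)+1) atTop atTop :=
    tendsto_atTop_add_const_right _ _ tendsto_natCast_atTop_atTop
  have t1 := (intervalIntegral_tendsto_integral_Ioi 1 hI hN).const_mul (s*(s+1)*(s+2)*(s+3))
  have r1 : Tendsto (fun N : ℕ => ((N:ℝ)+1)^(-s-1)) atTop (𝓝 0) := by
    have := (tendsto_rpow_neg_atTop (y := s+1) (by linarith)).comp hN
    convert this using 2
    simp only [Function.comp]; congr 1; ring
  have r2 : Tendsto (fun N : ℕ => ((N:ℝ)+1)^(-s)) atTop (𝓝 0) :=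
    (tendsto_rpow_neg_atTop (y := s) (by linarith)).comp hN
  have r3 : Tendsto (fun N : ℕ => ((N:ℝ)+1)^(1-s)) atTop (𝓝 0) := by
    have := (tendsto_rpow_neg_atTop (y := s-1) (by linarith)).comp hN
    convert this using 2
    simp only [Function.comp]; congr 1; ring
  have hsum : Summable (fun n : ℕ => ((n:ℝ)+1)^(-s)) := by
    have := (Real.summable_nat_rpow (p := -s)).2 (by linarith)
    have := (summable_nat_add_iff 1).2 this
    simpa using this
  have t2 := hsum.hasSum.tendsto_sum_nat
  have t3 := ((((r1.const_mul (-s)).add_const s).const_mul 2).sub (t2.const_mul 24)).add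
    ((r2.const_sub 1).const_mul 12) |>.add (((r3.sub_const 1).const_mul 24).div_const (1-s))
  have e := tendsto_nhds_unique t1 (t3.congr (fun N => (em_sum s hs N).symm))
  have hz : riemannZeta s = ((∑' n : ℕ, ((n:ℝ)+1)^(-s) : ℝ) : ℂ) := by
    rw [zeta_eq_tsum_one_div_nat_add_one_cpow (by simpa using hs), Complex.ofReal_tsum]
    congr 1; ext n
    rw [rpow_neg (by positivity), Complex.ofReal_inv, Complex.ofReal_cpow (by positivity)]
    push_cast
    rw [one_div]
  rw [hz, Mj_eq]
  set Z := ∑' n : ℕ, ((n:ℝ)+1)^(-s)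
  change s*(s+1)*(s+2)*(s+3) * Jr 0 s = _ at e
  have h1s : 1 - s ≠ 0 := by linarith
  have : (s-1) * Z = (s+2)*(s+3)/12 - (s-1)*s*(s+1)*(s+2)*(s+3)/24 * Jr 0 s := by
    field_simp at e
    linear_combination (-1/24)*e
  exact_mod_cast this

noncomputable def Fz : ℂ → ℂ := Function.update (fun s => (s-1) * riemannZeta s) 1 1

lemma Fz_ne (s : ℂ) (hs : s ≠ 1) : Fz s = (s-1) * riemannZeta s := by
  simp [Fz, Function.update_of_ne hs]

lemma Fz_diff : Differentiable ℂ Fz := by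
  have h : ∀ t : ℂ, t ≠ 1 → DifferentiableAt ℂ Fz t := by
    intro t ht
    have : DifferentiableAt ℂ (fun s => (s-1) * riemannZeta s) t :=
      (differentiableAt_id.sub_const 1).mul (differentiableAt_riemannZeta ht)
    apply this.congr_of_eventuallyEq
    filter_upwards [isOpen_ne.mem_nhds ht] with s hs using Fz_ne s hs
  intro s
  rcases ne_or_eq s 1 with hs | rfl
  · exact h s hs
  refine (Complex.analyticAt_of_differentiable_on_punctured_nhds_of_continuousAt ?_ ?_).differentiableAt
  · filter_upwards [self_mem_nhdsWithin] with t ht using h t ht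
  · simpa only [Fz, continuousAt_update_same] using riemannZeta_residue_one

noncomputable def Qc (s : ℂ) : ℂ := (s-1)*s*(s+1)*(s+2)*(s+3)/24
noncomputable def Qc1 (s : ℂ) : ℂ := (5*(s+1)^4-15*(s+1)^2+4)/24
noncomputable def Qc2 (s : ℂ) : ℂ := (20*(s+1)^3-30*(s+1))/24

noncomputable def G0 (s : ℂ) : ℂ := (s+2)*(s+3)/12 - Qc s * Mj 0 s
noncomputable def G1 (s : ℂ) : ℂ := (2*s+5)/12 - Qc1 s * Mj 0 s + Qc s * Mj 1 s
noncomputable def G2 (s : ℂ) : ℂ := 1/6 - Qc2 s * Mj 0 s + 2 * Qc1 s * Mj 1 s - Qc s * Mj 2 s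

lemma Qc_d (s : ℂ) : HasDerivAt Qc (Qc1 s) s := by
  have e : Qc = fun s => ((s+1)^5 - 5*(s+1)^3+4*(s+1))/24 := by
    ext s; unfold Qc; ring
  have y : HasDerivAt (fun s : ℂ => s+1) 1 s := (hasDerivAt_id s).add_const 1
  rw [e]
  convert! ((((y.pow 5).sub ((y.pow 3).const_mul 5)).add (y.const_mul 4)).div_const 24) using 1
  unfold Qc1
  push_cast; ring

lemma Qc1_d (s : ℂ) : HasDerivAt Qc1 (Qc2 s) s := by
  have y : HasDerivAt (fun s : ℂ => s+1) 1 s := (hasDerivAt_id s).add_const 1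
  convert! (((((y.pow 4).const_mul 5).sub ((y.pow 2).const_mul 15)).add_const 4).div_const 24) using 1
  unfold Qc2
  push_cast; ring

lemma G0_d (s : ℂ) (hs : -3 < s.re) : HasDerivAt G0 (G1 s) s := by
  have y := hasDerivAt_id s
  have := (((y.add_const 2).mul (y.add_const 3)).div_const 12).sub ((Qc_d s).mul (Mj_hasDerivAt 0 s hs))
  convert! this using 1
  simp only [G1, id]
  ring

lemma G1_d (s : ℂ) (hs : -3 < s.re) : HasDerivAt G1 (G2 s) s := by
  have y := hasDerivAt_id s
  have := (((((y.const_mul 2).add_const 5)).div_const 12).sub ((Qc1_d s).mul (Mj_hasDerivAt 0 s hs))).add ((Qc_d s).mul (Mj_hasDerivAt 1 s hs))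
  convert! this using 1
  simp only [G2]
  ring

lemma Fz_eq (s : ℂ) (hs : -3 < s.re) : Fz s = G0 s := by
  have hU : IsOpen {s : ℂ | -3 < s.re} := isOpen_lt continuous_const Complex.continuous_re
  have hc : IsPreconnected {s : ℂ | -3 < s.re} := (convex_halfSpace_re_gt (-3)).isPreconnected
  have a1 : AnalyticOnNhd ℂ Fz {s : ℂ | -3 < s.re} := Fz_diff.differentiableOn.analyticOnNhd hU
  have a2 : AnalyticOnNhd ℂ G0 {s : ℂ | -3 < s.re} :=
    DifferentiableOn.analyticOnNhd (fun z hz => (G0_d z hz).differentiableAt.differentiableWithinAt) hU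
  refine a1.eqOn_of_preconnected_of_frequently_eq a2 hc (z₀ := ((2:ℝ):ℂ)) (by simp; norm_num) ?_ hs
  have ht : Tendsto (fun x : ℝ => (x:ℂ)) (𝓝[≠] 2) (𝓝[≠] ((2:ℝ):ℂ)) := by
    apply tendsto_nhdsWithin_of_tendsto_nhds_of_eventually_within
    · exact (Complex.continuous_ofReal.tendsto 2).mono_left nhdsWithin_le_nhds
    · filter_upwards [self_mem_nhdsWithin] with x hx
      intro h
      exact hx (Complex.ofReal_injective h)
  apply ht.frequently
  apply Eventually.frequently
  have : ∀ᶠ x : ℝ in 𝓝[≠] 2, 1 < x := mem_nhdsWithin_of_mem_nhds (Ioi_mem_nhds (by norm_num))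
  filter_upwards [this] with x hx
  rw [Fz_ne _ (by exact_mod_cast hx.ne'), em_zeta x hx]
  rfl

lemma zeta_eq (s : ℂ) (hs : -3 < s.re) (h1 : s ≠ 1) : riemannZeta s = G0 s / (s-1) := by
  rw [← Fz_eq s hs, Fz_ne s h1]
  field_simp [sub_ne_zero.2 h1]

lemma zeta_d (s : ℂ) (hs : -3 < s.re) (h1 : s ≠ 1) : deriv riemannZeta s = G1 s / (s-1) - G0 s/(s-1)^2 := by
  have h1' := sub_ne_zero.2 h1
  have : HasDerivAt riemannZeta (G1 s / (s-1) - G0 s/(s-1)^2) s := by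
    have := (G0_d s hs).div ((hasDerivAt_id s).sub_const 1) h1'
    have h2 : HasDerivAt riemannZeta ((G1 s * (id s - 1) - G0 s * 1) / (id s - 1)^2) s := by
      apply this.congr_of_eventuallyEq
      have hU : IsOpen {s : ℂ | -3 < s.re} := isOpen_lt continuous_const Complex.continuous_re
      filter_upwards [isOpen_ne.mem_nhds h1, hU.mem_nhds hs] with z hz hz2
      exact zeta_eq z hz2 hz
    convert h2 using 1
    simp only [id]
    field_simp
  exact this.deriv

lemma logd (s : ℂ) (hs : -3 < s.re) (h1 : s ≠ 1) (h0 : G0 s ≠ 0) : deriv riemannZeta s / riemannZeta s = G1 s / G0 s - 1/(s-1) := by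
  have h1' := sub_ne_zero.2 h1
  rw [zeta_d s hs h1, zeta_eq s hs h1]
  field_simp

lemma G1_one : G1 1 = (eulerMascheroniConstant : ℂ) := by
  have h := (G0_d 1 (by simp; norm_num)).tendsto_slope
  have hG : G0 1 = 1 := by rw [← Fz_eq 1 (by simp; norm_num)]; simp [Fz]
  refine tendsto_nhds_unique h (tendsto_riemannZeta_sub_one_div.congr' ?_)
  have hU : IsOpen {s : ℂ | -3 < s.re} := isOpen_lt continuous_const Complex.continuous_re
  filter_upwards [self_mem_nhdsWithin, mem_nhdsWithin_of_mem_nhds (hU.mem_nhds (show (1:ℂ) ∈ _ by simp; norm_num))] with z hz hz2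
  have h1' := sub_ne_zero.2 hz
  rw [slope_def_field, hG, zeta_eq z hz2 hz]
  field_simp

lemma c_eq (h0 : G0 (-1) ≠ 0) : 
  deriv riemannZeta (-1) / riemannZeta (-1)
    - 2 * deriv (fun s : ℂ => deriv riemannZeta s / riemannZeta s) (-1) =
   G1 (-1) / G0 (-1) - 2 * ((G2 (-1) * G0 (-1) - G1 (-1) * G1 (-1)) / G0 (-1)^2) := by
  have hs : -3 < (-1:ℂ).re := by norm_num
  have h1 : (-1:ℂ) ≠ 1 := by norm_num
  rw [logd _ hs h1 h0]
  have hU : IsOpen {s : ℂ | -3 < s.re} := isOpen_lt continuous_const Complex.continuous_re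
  have d : HasDerivAt (fun s : ℂ => deriv riemannZeta s / riemannZeta s)
     ((G2 (-1) * G0 (-1) - G1 (-1) * G1 (-1)) / G0 (-1)^2 + 1/4) (-1) := by
    have d1 := (G1_d _ hs).div (G0_d _ hs) h0
    have d2 := ((hasDerivAt_id (-1:ℂ)).sub_const 1).inv (by norm_num)
    have d3 := d1.sub d2
    have : HasDerivAt (fun s : ℂ => deriv riemannZeta s / riemannZeta s) ((G2 (-1) * G0 (-1) - G1 (-1) * G1 (-1)) / G0 (-1) ^ 2 - -1 / (id (-1) - 1) ^ 2) (-1) := by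
      apply d3.congr_of_eventuallyEq
      filter_upwards [isOpen_ne.mem_nhds h1, hU.mem_nhds hs, (G0_d _ hs).continuousAt.eventually_ne h0] with z hz hz2 hz3
      rw [logd z hz2 hz hz3]
      simp
    convert this using 1
    norm_num
  rw [d.deriv]
  ring

noncomputable def q0 (s : ℝ) : ℝ := (s-1)*s*(s+1)*(s+2)*(s+3)/24
noncomputable def q1 (s : ℝ) : ℝ := (5*(s+1)^4-15*(s+1)^2+4)/24
noncomputable def q2 (s : ℝ) : ℝ := (20*(s+1)^3-30*(s+1))/24
noncomputable def g0 (s : ℝ) : ℝ := (s+2)*(s+3)/12 - q0 s * Jr 0 s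
noncomputable def g1 (s : ℝ) : ℝ := (2*s+5)/12 - q1 s * Jr 0 s + q0 s * Jr 1 s
noncomputable def g2 (s : ℝ) : ℝ := 1/6 - q2 s * Jr 0 s + 2 * q1 s * Jr 1 s - q0 s * Jr 2 s

lemma G0_real (s : ℝ) : G0 s = (g0 s : ℂ) := by
  simp only [G0, g0, Qc, q0, Mj_eq]; push_cast; ring
lemma G1_real (s : ℝ) : G1 s = (g1 s : ℂ) := by
  simp only [G1, g1, Qc, q0, Qc1, q1, Mj_eq]; push_cast; ring
lemma G2_real (s : ℝ) : G2 s = (g2 s : ℂ) := by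
  simp only [G2, g2, Qc, q0, Qc1, q1, Qc2, q2, Mj_eq]; push_cast; ring

lemma g0_d (s : ℝ) (hs : -3 < s) : HasDerivAt g0 (g1 s) s := by
  have := (G0_d s (by simpa using hs)).real_of_complex
  simpa [G0_real, G1_real] using this
lemma g1_d (s : ℝ) (hs : -3 < s) : HasDerivAt g1 (g2 s) s := by
  have := (G1_d s (by simpa using hs)).real_of_complex
  simpa [G2_real, G1_real] using this

lemma g1_one : g1 1 = eulerMascheroniConstant := by
  have := G1_one
  rw [show (1:ℂ) = ((1:ℝ):ℂ) by simp, G1_real] at this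
  exact_mod_cast this

lemma J0z (s : ℝ) (hs : -3 < s) : Jr 0 s * (s+3) ≤ 1/16 := by
  have := J0_le s hs
  have h : 0 < s+3 := by linarith
  rw [le_div_iff₀ (by positivity)] at this
  linarith
lemma J1z (s : ℝ) (hs : -3 < s) : Jr 1 s * (s+3)^2 ≤ 1/8 := by
  have := J1_le s hs
  have h : 0 < s+3 := by linarith
  rw [le_div_iff₀ (by positivity)] at this
  linarith

lemma g0_pos (s : ℝ) (h1 : -2 < s) (h2 : s ≤ 1) : 0 < g0 s := by
  have a := J0z s (by linarith)
  have b := Jr_nonneg 0 s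
  have e : g0 s = (s+2)*(s+3)/12 * (1 - (s-1)*s*(s+1)/2 * Jr 0 s) := by unfold g0 q0; ring
  rw [e]
  have c : Jr 0 s ≤ 1/16 := by nlinarith
  have d : (s-1)*s*(s+1) ≤ 6 := by nlinarith [sq_nonneg s, mul_nonneg (sub_nonneg.2 h2) (sq_nonneg (s+1))]
  have : 0 < s+2 := by linarith
  have : 0 < s+3 := by linarith
  have : 0 < (1 - (s-1)*s*(s+1)/2 * Jr 0 s) := by nlinarith
  positivity

lemma g1_pos (s : ℝ) (h1 : -2 < s) (h2 : s < 1) : 0 < g1 s := by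
  have a := J0z s (by linarith)
  have a' := J1z s (by linarith)
  have b := Jr_nonneg 0 s
  have b' := Jr_nonneg 1 s
  obtain ⟨u, hu⟩ : ∃ u, u = s + 1 := ⟨_, rfl⟩
  have hs : s = u - 1 := by linarith
  unfold g1 q1 q0
  subst hs
  generalize Jr 0 (u-1) = J0 at *
  generalize Jr 1 (u-1) = J1 at *
  have hz : 1 < u + 2 := by linarith
  have c0 : J0 * (u+2) ≤ 1/16 := by linarith
  have c1 : J1 ≤ 1/8 := by
    have : 1 ≤ (u - 1 + 3)^2 := by nlinarith
    nlinarith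
  have e1 : 5*u^4-15*u^2+4 ≤ 6*(u+2) := by
    have k : 0 ≤ 5*u*(u+1)^2+4 := by
      rcases le_total 0 u with h | h
      · positivity
      · nlinarith [mul_nonneg (neg_nonneg.2 h) (by linarith : 0 ≤ u+1)]
    nlinarith [mul_nonneg k (by linarith : 0 ≤ 2 - u)]
  have e2 : -5 ≤ u^5-5*u^3+4*u := by
    rcases le_total 0 u with h | h
    · nlinarith [mul_nonneg h (sq_nonneg (u^2-5/2))]
    · have : u^2 ≤ 1 := by nlinarith
      have h4 : (u^2)*(u^2-5) ≤ 0 := by nlinarith [sq_nonneg u]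
      nlinarith [mul_nonneg_of_nonpos_of_nonpos h h4]
  have f1 : (5*u^4-15*u^2+4) * J0 ≤ 6/16 := by
    calc _ ≤ 6*(u+2) * J0 := by gcongr
      _ ≤ _ := by linarith
  have f2 : -5/8 ≤ (u^5-5*u^3+4*u) * J1 := by nlinarith
  have : (2*(u-1)+5)/12 - (5*(u-1+1)^4-15*(u-1+1)^2+4)/24*J0 + (u-1-1)*(u-1)*(u-1+1)*(u-1+2)*(u-1+3)/24*J1
    = ((2*(2*u+3)) - (5*u^4-15*u^2+4) * J0 + (u^5-5*u^3+4*u) * J1)/24 := by ring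
  rw [this]
  linarith

lemma g0_neg_one : g0 (-1) = 1/6 := by unfold g0 q0; norm_num
noncomputable def cr : ℝ := 6 * g1 (-1) - 12 * g2 (-1) + 72 * g1 (-1)^2

lemma cr_ge : 3.65 ≤ cr := by
  have a := J0z (-1) (by norm_num)
  have a' := J1z (-1) (by norm_num)
  have b := Jr_nonneg 0 (-1)
  have b' := Jr_nonneg 1 (-1)
  unfold cr g1 g2 q0 q1 q2
  norm_num at a a' ⊢
  nlinarith

lemma gam_bd : 0.56 ≤ g1 1 ∧ g1 1 ≤ 7/12 := by
  have a := J0z 1 (by norm_num)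
  have b := Jr_nonneg 0 1
  unfold g1 q0 q1
  norm_num at a ⊢
  constructor <;> linarith

lemma g2_nonneg (s : ℝ) (h1 : 0 ≤ s) (h2 : s ≤ 1) : 0 ≤ g2 s := by
  have a := J0z s (by linarith)
  have a' := J1z s (by linarith)
  have b := Jr_nonneg 0 s
  have b' := Jr_nonneg 1 s
  have b2 := Jr_nonneg 2 s
  have e0 : q0 s ≤ 0 := by
    unfold q0
    have : 0 ≤ (1-s)*s*(s+1)*(s+2)*(s+3) := by
      have : 0 ≤ 1 - s := by linarith
      positivity
    nlinarith
  have e1 : -(1/2) ≤ q1 s := by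
    unfold q1
    nlinarith [sq_nonneg ((s+1)^2-3/2)]
  have e2 : q2 s ≤ 5/4 * (s+3) := by
    unfold q2
    nlinarith [mul_nonneg h1 (sub_nonneg.2 h2), mul_nonneg (mul_nonneg h1 (sub_nonneg.2 h2)) h1]
  have c1 : q2 s * Jr 0 s ≤ 5/4*(1/16) := by
    calc _ ≤ 5/4 * (s+3) * Jr 0 s := by gcongr
      _ ≤ _ := by linarith
  have c2 : Jr 1 s ≤ 1/72 := by
    have : 9 ≤ (s+3)^2 := by nlinarith
    nlinarith
  unfold g2
  nlinarith [mul_nonneg (neg_nonneg.2 e0) b2]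

lemma g1_le_gam (s : ℝ) (h1 : 0 ≤ s) (h2 : s ≤ 1) : g1 s ≤ g1 1 := by
  have : MonotoneOn g1 (Icc 0 1) := by
    apply monotoneOn_of_deriv_nonneg (convex_Icc _ _)
    · intro x hx
      exact (g1_d x (by linarith [hx.1])).continuousAt.continuousWithinAt
    · intro x hx
      rw [interior_Icc] at hx
      exact (g1_d x (by linarith [hx.1])).differentiableAt.differentiableWithinAt
    · intro x hx
      rw [interior_Icc] at hx
      rw [(g1_d x (by linarith [hx.1])).deriv]
      exact g2_nonneg x hx.1.le hx.2.le
  exact this ⟨h1, h2⟩ ⟨by norm_num, le_rfl⟩ h2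

lemma key (s : ℝ) (h1 : -1 ≤ s) (h2 : s ≤ 1) : g1 s / g0 s ≤ g1 1 + (cr - g1 1)/4 * (1-s) := by
  have hp := g0_pos s (by linarith) h2
  rw [div_le_iff₀ hp]
  have hc := cr_ge
  obtain ⟨l, u⟩ := gam_bd
  obtain ⟨m, hm⟩ : ∃ m, m = (cr - g1 1)/4 := ⟨_, rfl⟩
  have hm' : 0.76 ≤ m := by rw [hm]; linarith
  rw [← hm]
  have a := J0z s (by linarith)
  have a' := J1z s (by linarith)
  have b := Jr_nonneg 0 s
  have b' := Jr_nonneg 1 s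
  have ht : 0 ≤ 1 - s := by linarith
  rcases le_total 0 s with h | h
  · have e := g1_le_gam s h h2
    have f : (s+2)*(s+3)/12 ≤ g0 s := by
      have e0 : q0 s ≤ 0 := by
        unfold q0
        have : 0 ≤ (1-s)*s*(s+1)*(s+2)*(s+3) := by
          positivity
        nlinarith
      unfold g0
      nlinarith
    refine e.trans ?_
    generalize g1 1 = γ at *
    have hmm : 0 ≤ γ + m*(1-s) := by nlinarith
    refine le_trans ?_ (mul_le_mul_of_nonneg_left f hmm)
    have hmg : γ ≤ m := by linarith
    obtain ⟨t, rfl⟩ : ∃ t, s = 1 - t := ⟨1-s, by ring⟩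
    have : 0 ≤ 12*m - 7*γ + γ*t - 7*m*t + m*t^2 := by nlinarith
    nlinarith
  · have e0 : 0 ≤ q0 s := by
      unfold q0
      have : 0 ≤ (1-s)*(-s)*(s+1)*(s+2)*(s+3) := by
        have : 0 ≤ -s := by linarith
        have : 0 ≤ s+1 := by linarith
        have : 0 ≤ s+2 := by linarith
        have : 0 ≤ s+3 := by linarith
        positivity
      nlinarith
    have e0' : q0 s ≤ 1/2 := by
      unfold q0
      have k1 : (-s) * ((s+1) * (s+2)) ≤ 2 := by nlinarith [mul_nonneg (neg_nonneg.2 h) (by linarith : 0 ≤ s+1)]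
      have k2 : 0 ≤ (-s) * ((s+1) * (s+2)) := mul_nonneg (by linarith) (mul_nonneg (by linarith) (by linarith))
      have k3 : (1-s)*(s+3) ≤ 4 := by nlinarith [sq_nonneg (s+1)]
      nlinarith
    have e1 : -(1/4) ≤ q1 s := by
      unfold q1
      obtain ⟨v, hv⟩ : ∃ v, v = (s+1)^2 := ⟨_, rfl⟩
      have hv1 : v ≤ 1 := by rw [hv]; nlinarith
      rw [show (s+1)^4 = v^2 by rw [hv]; ring, ← hv]
      nlinarith
    have c0 : Jr 0 s ≤ 1/32 := by nlinarith
    have c1 : Jr 1 s ≤ 1/32 := by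
      have : 4 ≤ (s+3)^2 := by nlinarith
      nlinarith
    have d1 : g1 s ≤ (2*s+5)/12 + 3/128 := by
      unfold g1; nlinarith
    have d0 : (s+2)*(s+3)/12 - 1/64 ≤ g0 s := by
      unfold g0; nlinarith
    refine d1.trans ?_
    have hmm : 0 ≤ g1 1 + m*(1-s) := by nlinarith
    refine le_trans ?_ (mul_le_mul_of_nonneg_left d0 hmm)
    have : 0.56 + 0.76*(1-s) ≤ g1 1 + m*(1-s) := by nlinarith
    refine le_trans ?_ (mul_le_mul_of_nonneg_right this (by nlinarith))
    have k1 : 0 ≤ (-s)*(s+1) := mul_nonneg (by linarith) (by linarith)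
    have k2 : 0 ≤ (-s)^3 := by
      have : 0 ≤ -s := by linarith
      positivity
    norm_num
    nlinarith

lemma cConst_eq : cConst = (cr : ℂ) := by
  have h : G0 (-1) = ((1/6:ℝ):ℂ) := by
    rw [show (-1:ℂ) = ((-1:ℝ):ℂ) by simp, G0_real, g0_neg_one]
  unfold cConst
  rw [c_eq (by rw [h]; norm_num), h]
  rw [show (-1:ℂ) = ((-1:ℝ):ℂ) by simp, G1_real, G2_real]
  unfold cr
  push_cast
  field_simp
  ring

lemma Atil_eq (s : ℝ) (h1 : -2 < s) (h2 : s < 1) : Atil s = ((-(g1 s / g0 s) : ℝ) : ℂ) := by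
  have h := g0_pos s h1 h2.le
  unfold Atil
  rw [logd s (by simp; linarith) (by exact_mod_cast h2.ne) (by rw [G0_real]; exact_mod_cast h.ne'),
    G0_real, G1_real]
  push_cast
  ring

lemma int_p (x γ c : ℝ) (hx : 1 < x) :
    ∫ s in (-1:ℝ)..1, (γ + (c-γ)/4*(1-s)) * (1-s) * x^s =
     γ * x / (log x)^2 + (c-γ)/2 * x / (log x)^3 - (c+γ)/(x * log x) - c / (x * (log x)^2)
       - (c-γ)/(2*x*(log x)^3) := by
  have hx0 : 0 < x := by linarith
  have hL : log x ≠ 0 := (log_pos hx).ne'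
  have key : ∀ s ∈ uIcc (-1:ℝ) 1, HasDerivAt (fun s : ℝ =>
      ((γ + (c-γ)/4*(1-s)) * (1-s)/ log x - (-γ - (c-γ)/2*(1-s))/(log x)^2 + ((c-γ)/2)/(log x)^3) * x^s)
      ((γ + (c-γ)/4*(1-s)) * (1-s) * x^s) s := by
    intro s _
    have y : HasDerivAt (fun s : ℝ => 1 - s) (-1) s := (hasDerivAt_id s).const_sub 1
    have e := (hasDerivAt_id s).const_rpow hx0
    have := ((((((y.const_mul ((c-γ)/4)).const_add γ).mul y).div_const (log x)).sub
      (((y.const_mul ((c-γ)/2)).const_sub (-γ)).div_const ((log x)^2))).add_const (((c-γ)/2)/(log x)^3)).mul e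
    convert! this using 1
    simp only [Pi.mul_apply, Pi.sub_apply, id]
    field_simp
    ring
  rw [intervalIntegral.integral_eq_sub_of_hasDerivAt key]
  · rw [rpow_neg_one, rpow_one]
    field_simp
    ring
  · apply Continuous.intervalIntegrable
    have : Continuous (fun s : ℝ => x^s) := continuous_const_rpow hx0.ne'
    fun_prop

theorem stmt_12 :
    (∀ s : ℝ, -2 < s → s < 1 → Atil s < 0) ∧
    (∀ x : ℝ, 1 < x →
      -(∫ s in (-1 : ℝ)..1, Atil s * ((1 - s : ℝ) : ℂ) * ((x ^ s : ℝ) : ℂ))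
        ≤ (Real.eulerMascheroniConstant : ℂ) * (x : ℂ) / ((Real.log x : ℝ) : ℂ) ^ 2
          + (cConst - (Real.eulerMascheroniConstant : ℂ)) / 2 * (x : ℂ)
              / ((Real.log x : ℝ) : ℂ) ^ 3
          - (cConst + (Real.eulerMascheroniConstant : ℂ))
              / ((x : ℂ) * ((Real.log x : ℝ) : ℂ))
          - cConst / ((x : ℂ) * ((Real.log x : ℝ) : ℂ) ^ 2)
          - (cConst - (Real.eulerMascheroniConstant : ℂ))
              / (2 * (x : ℂ) * ((Real.log x : ℝ) : ℂ) ^ 3)) := by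
  constructor
  · intro s h1 h2
    rw [Atil_eq s h1 h2, ← Complex.ofReal_zero, Complex.real_lt_real]
    have := div_pos (g1_pos s h1 h2) (g0_pos s h1 h2.le)
    linarith
  · intro x hx
    have hx0 : 0 < x := by linarith
    have e : (∫ s in (-1 : ℝ)..1, Atil s * ((1 - s : ℝ) : ℂ) * ((x ^ s : ℝ) : ℂ))
        = ((∫ s in (-1:ℝ)..1, -(g1 s / g0 s) * (1-s) * x^s : ℝ) : ℂ) := by
      rw [← intervalIntegral.integral_ofReal]
      apply intervalIntegral.integral_congr_ae
      have : ∀ᵐ s : ℝ, s ≠ 1 := by simp [ae_iff, measure_singleton]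
      filter_upwards [this] with s hs1 hs
      rw [uIoc_of_le (by norm_num)] at hs
      rw [Atil_eq s (by linarith [hs.1]) (lt_of_le_of_ne hs.2 hs1)]
      push_cast
      ring
    have hc : Continuous (fun s : ℝ => x^s) := continuous_const_rpow hx0.ne'
    have i1 : IntervalIntegrable (fun s => (g1 s / g0 s) * (1-s) * x^s) volume (-1) 1 := by
      apply ContinuousOn.intervalIntegrable
      rw [uIcc_of_le (by norm_num)]
      apply ContinuousOn.mul _ hc.continuousOn
      apply ContinuousOn.mul _ (by fun_prop)
      apply ContinuousOn.div
      · intro s hs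
        exact (g1_d s (by linarith [hs.1])).continuousAt.continuousWithinAt
      · intro s hs
        exact (g0_d s (by linarith [hs.1])).continuousAt.continuousWithinAt
      · intro s hs
        exact (g0_pos s (by linarith [hs.1]) hs.2).ne'
    have i2 : IntervalIntegrable (fun s => (g1 1 + (cr-g1 1)/4*(1-s)) * (1-s) * x^s) volume (-1) 1 := by
      apply Continuous.intervalIntegrable
      fun_prop
    have hle := intervalIntegral.integral_mono_on (by norm_num : (-1:ℝ) ≤ 1) i1 i2 (by
      intro s hs
      have : 0 ≤ 1 - s := by linarith [hs.2]
      have := key s hs.1 hs.2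
      gcongr)
    rw [int_p x _ _ hx, g1_one] at hle
    have e2 : (∫ s in (-1:ℝ)..1, -(g1 s / g0 s) * (1-s) * x^s) = -∫ s in (-1:ℝ)..1, (g1 s / g0 s) * (1-s) * x^s := by
      rw [← intervalIntegral.integral_neg]
      congr 1; ext s; ring
    rw [e, e2, cConst_eq]
    push_cast
    rw [neg_neg]
    exact_mod_cast hle
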